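/- arXiv:math-ph/0408060 — 2 statements merged into one kernel-verified Lean document; each statement's English description precedes it below -/
import Mathlib

section
/- There exists a universal constant M > 0 such that for every γ > 0, D > 0, S > 0, every k ∈ ℤ²_* with |k| ≥ 2, and every ω : ℤ²_* → ℂ with |ω|_{∞,γ} ≤ D and ‖ω‖ ≤ S, the partial sum Σ₁ = ∑_{ℓ₂ ∈ ℤ²_*, 0 < |ℓ₂| ≤ |k|/2, k−ℓ₂ ∈ ℤ²_*} |ω_{k−ℓ₂}| · |ω_{ℓ₂}| · (|k|/|ℓ₂|) satisfies Σ₁ ≤ 2^γ · D · S · M · |k| · √(log|k|) / |k|^γ. -/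
/-!
Write `R = |k| ≥ 2`. If `|ℓ| ≤ R / 2` then `|k - ℓ| ≥ R / 2`, so the weighted bound gives
`|ω_{k-ℓ}| ≤ 2 ^ γ * D / R ^ γ`, which factors out of the sum. By Cauchy–Schwarz the remaining sum
`∑ |ω_ℓ| / |ℓ|` is at most `S` times the square root of `∑_{0 < |ℓ| ≤ R / 2} |ℓ|⁻²`.
This lattice sum is estimated over the sup-norm shells `Finset.box n`, `1 ≤ n ≤ R / 2`: each has `8 n`
points, all with `|ℓ| ≥ n`, so the sum is at most `8 (1 + log (R / 2)) ≤ 16 log R` (`sum_shells_le`).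
Hence `M = 4` works.
-/

open scoped Classical

/-- `ℤ²_* = ℤ² ∖ {0}`. -/
abbrev Zstar : Type := {k : ℤ × ℤ // k ≠ 0}

/-- Euclidean norm of a lattice point. -/
noncomputable def znorm (a : ℤ × ℤ) : ℝ := Real.sqrt ((a.1 : ℝ) ^ 2 + (a.2 : ℝ) ^ 2)

/-- Extension of a function on `ℤ²_*` to `ℤ²` by zero. -/
noncomputable def zext (ω : Zstar → ℂ) : ℤ × ℤ → ℂ :=
  fun k => if h : k ≠ 0 then ω ⟨k, h⟩ else 0

lemma znorm_nonneg (a : ℤ × ℤ) : 0 ≤ znorm a := Real.sqrt_nonneg _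

lemma znorm_eq_norm (a : ℤ × ℤ) : znorm a = ‖(⟨(a.1 : ℝ), (a.2 : ℝ)⟩ : ℂ)‖ := by
  rw [Complex.norm_def, Complex.normSq_mk, znorm]
  ring_nf

lemma znorm_le_add (a b : ℤ × ℤ) : znorm a ≤ znorm (a - b) + znorm b := by
  simp only [znorm_eq_norm]
  have h : (⟨(a.1 : ℝ), (a.2 : ℝ)⟩ : ℂ)
      = ⟨((a - b).1 : ℝ), ((a - b).2 : ℝ)⟩ + ⟨(b.1 : ℝ), (b.2 : ℝ)⟩ := by
    apply Complex.ext <;> simp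
  rw [h]
  exact norm_add_le _ _

/-- The sup norm on `ℤ²` is at most the Euclidean norm. -/
lemma max_natAbs_le_znorm (a : ℤ × ℤ) : ((max a.1.natAbs a.2.natAbs : ℕ) : ℝ) ≤ znorm a := by
  rw [Nat.cast_max, max_le_iff]
  constructor <;> apply Real.le_sqrt_of_sq_le
  · rw [Nat.cast_natAbs, Int.cast_abs, sq_abs]
    nlinarith [sq_nonneg (a.2 : ℝ)]
  · rw [Nat.cast_natAbs, Int.cast_abs, sq_abs]
    nlinarith [sq_nonneg (a.1 : ℝ)]

/-- The lattice points whose sup norm lies in `[1, N]`, as a union of shells. -/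
noncomputable def shells (N : ℕ) : Finset (ℤ × ℤ) := (Finset.Icc 1 N).biUnion fun n => Finset.box n

lemma mem_shells {N : ℕ} {a : ℤ × ℤ} :
    a ∈ shells N ↔ 1 ≤ max a.1.natAbs a.2.natAbs ∧ max a.1.natAbs a.2.natAbs ≤ N := by
  simp only [shells, Finset.mem_biUnion, Finset.mem_Icc, Int.mem_box]
  constructor
  · rintro ⟨n, hn, rfl⟩
    exact hn
  · intro h
    exact ⟨_, h, rfl⟩

lemma one_le_max_natAbs {a : ℤ × ℤ} (ha : a ≠ 0) : 1 ≤ max a.1.natAbs a.2.natAbs := by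
  by_contra h
  exact ha (Prod.ext (by simp; omega) (by simp; omega))

lemma ne_zero_of_mem_shells {N : ℕ} {a : ℤ × ℤ} (h : a ∈ shells N) : a ≠ 0 := by
  rintro rfl
  simp [mem_shells] at h

lemma mem_shells_of_znorm_le {R : ℝ} {a : ℤ × ℤ} (ha : a ≠ 0) (h : znorm a ≤ R) :
    a ∈ shells ⌊R⌋₊ :=
  mem_shells.2 ⟨one_le_max_natAbs ha, Nat.le_floor ((max_natAbs_le_znorm a).trans h)⟩

/-- The lattice sum of `|ℓ|⁻²` grows logarithmically, since the `n`-th shell contributes at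
most `8 / n`. -/
lemma sum_shells_le {R : ℝ} (hR : 2 ≤ R) :
    ∑ a ∈ shells ⌊R / 2⌋₊, (1 / znorm a) ^ 2 ≤ 16 * Real.log R := by
  have h1 : ∑ a ∈ shells ⌊R / 2⌋₊, (1 / znorm a) ^ 2
      ≤ ∑ n ∈ Finset.Icc 1 ⌊R / 2⌋₊, ∑ a ∈ (Finset.box n : Finset (ℤ × ℤ)), (1 / znorm a) ^ 2 := by
    rw [shells, Finset.sum_biUnion]
    intro m _ n _ hmn
    rw [Function.onFun, Finset.disjoint_left]
    intro a ha hb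
    rw [Int.mem_box] at ha hb
    exact hmn (ha.symm.trans hb)
  have h2 : ∀ n ∈ Finset.Icc 1 ⌊R / 2⌋₊,
      ∑ a ∈ (Finset.box n : Finset (ℤ × ℤ)), (1 / znorm a) ^ 2 ≤ 8 * (n : ℝ)⁻¹ := by
    intro n hn
    have hn1 : 1 ≤ n := (Finset.mem_Icc.1 hn).1
    have hpos : (0 : ℝ) < n := by exact_mod_cast hn1
    have h3 : ∀ a ∈ (Finset.box n : Finset (ℤ × ℤ)), (1 / znorm a) ^ 2 ≤ (1 / (n : ℝ)) ^ 2 := by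
      intro a ha
      have hle : (n : ℝ) ≤ znorm a := by
        have := max_natAbs_le_znorm a
        rwa [Int.mem_box.1 ha] at this
      have := znorm_nonneg a
      gcongr
    refine (Finset.sum_le_card_nsmul _ _ _ h3).trans (le_of_eq ?_)
    rw [Int.card_box (by omega), nsmul_eq_mul]
    push_cast
    field_simp
  have h4 : ∑ n ∈ Finset.Icc 1 ⌊R / 2⌋₊, (n : ℝ)⁻¹ ≤ 1 + Real.log (R / 2) := by
    have := harmonic_floor_le_one_add_log (R / 2) (by linarith)
    rw [harmonic_eq_sum_Icc] at this
    push_cast at this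
    exact this
  have h5 : Real.log (R / 2) = Real.log R - Real.log 2 :=
    Real.log_div (by linarith) (by norm_num)
  have h6 : Real.log 2 ≤ Real.log R := Real.log_le_log (by norm_num) hR
  have h7 := Finset.sum_le_sum h2
  rw [← Finset.mul_sum] at h7
  -- `1 - log 2 ≤ log 2 ≤ log R` absorbs the constant term
  have h8 := Real.log_two_gt_d9
  linarith

lemma zext_of_ne (ω : Zstar → ℂ) {a : ℤ × ℤ} (h : a ≠ 0) : zext ω a = ω ⟨a, h⟩ := dif_pos h

lemma sum_shells_zext_sq_le (ω : Zstar → ℂ) (hs : Summable fun j : Zstar => ‖ω j‖ ^ 2) (N : ℕ) :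
    ∑ a ∈ shells N, ‖zext ω a‖ ^ 2 ≤ ∑' j : Zstar, ‖ω j‖ ^ 2 := by
  rw [← Finset.sum_subtype_of_mem (p := fun a => a ≠ 0) _ fun _ h => ne_zero_of_mem_shells h]
  refine le_trans (le_of_eq ?_)
    (hs.sum_le_tsum ((shells N).subtype fun a => a ≠ 0) fun _ _ => by positivity)
  exact Finset.sum_congr rfl fun j _ => by rw [zext_of_ne ω j.2]

/-- The weighted sup bound at `k - ℓ`, using `|k - ℓ| ≥ |k| / 2`. -/
lemma norm_zext_sub_le {γ D : ℝ} (hγ : 0 < γ) {k ℓ : ℤ × ℤ} (hk : 2 ≤ znorm k) (ω : Zstar → ℂ)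
    (hω : ∀ j : Zstar, znorm j.1 ^ γ * ‖ω j‖ ≤ D) (hℓ : znorm ℓ ≤ znorm k / 2)
    (hkℓ : k - ℓ ≠ 0) : ‖zext ω (k - ℓ)‖ ≤ 2 ^ γ * D / znorm k ^ γ := by
  rw [zext_of_ne ω hkℓ]
  have h1 := hω ⟨k - ℓ, hkℓ⟩
  have h2 : znorm k ≤ 2 * znorm (k - ℓ) := by linarith [znorm_le_add k ℓ]
  have h3 : znorm k ^ γ ≤ 2 ^ γ * znorm (k - ℓ) ^ γ := by
    rw [← Real.mul_rpow (by norm_num) (znorm_nonneg _)]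
    exact Real.rpow_le_rpow (znorm_nonneg _) h2 hγ.le
  rw [le_div_iff₀ (Real.rpow_pos_of_pos (by linarith) _)]
  calc _ ≤ ‖ω ⟨k - ℓ, hkℓ⟩‖ * (2 ^ γ * znorm (k - ℓ) ^ γ) := by gcongr
    _ = 2 ^ γ * (znorm (k - ℓ) ^ γ * ‖ω ⟨k - ℓ, hkℓ⟩‖) := by ring
    _ ≤ 2 ^ γ * D := by gcongr

/-- there is a universal constant `M > 0` bounding the partial sum `Σ₁`
of the Navier–Stokes nonlinearity over `0 < |ℓ₂| ≤ |k|/2`. -/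
theorem stmt1 :
    ∃ M : ℝ, 0 < M ∧
      ∀ (γ D S : ℝ), 0 < γ → 0 < D → 0 < S →
      ∀ k : Zstar, 2 ≤ znorm k.1 →
      ∀ ω : Zstar → ℂ,
        (∀ j : Zstar, znorm j.1 ^ γ * ‖ω j‖ ≤ D) →
        (Summable fun j : Zstar => ‖ω j‖ ^ 2) →
        (∑' j : Zstar, ‖ω j‖ ^ 2) ≤ S ^ 2 →
        (∑' ℓ : ℤ × ℤ,
            if ℓ ≠ 0 ∧ znorm ℓ ≤ znorm k.1 / 2 ∧ k.1 - ℓ ≠ 0 then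
              ‖zext ω (k.1 - ℓ)‖ * ‖zext ω ℓ‖ * (znorm k.1 / znorm ℓ)
            else 0)
          ≤ (2 : ℝ) ^ γ * D * S * M * znorm k.1 * Real.sqrt (Real.log (znorm k.1))
              / znorm k.1 ^ γ := by
  refine ⟨4, by norm_num, ?_⟩
  intro γ D S hγ hD hS k hk ω hω hs hS2
  set R := znorm k.1 with hR
  have hRpos : 0 < R := by linarith
  rw [tsum_eq_sum (s := shells ⌊R / 2⌋₊)]
  swap
  · intro ℓ hℓ
    rw [if_neg]
    rintro ⟨h0, h1, -⟩
    exact hℓ (mem_shells_of_znorm_le h0 h1)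
  have hC : 0 ≤ (2 : ℝ) ^ γ * D / R ^ γ := by positivity
  calc _ ≤ ∑ ℓ ∈ shells ⌊R / 2⌋₊, 2 ^ γ * D / R ^ γ * R * (‖zext ω ℓ‖ * (1 / znorm ℓ)) := by
        refine Finset.sum_le_sum fun ℓ _ => ?_
        have hz := znorm_nonneg ℓ
        split_ifs with h
        · calc _ ≤ 2 ^ γ * D / R ^ γ * ‖zext ω ℓ‖ * (R / znorm ℓ) := by
                gcongr
                exact norm_zext_sub_le hγ hk ω hω h.2.1 h.2.2
            _ = _ := by ring
        · positivity
    _ = 2 ^ γ * D / R ^ γ * R * ∑ ℓ ∈ shells ⌊R / 2⌋₊, ‖zext ω ℓ‖ * (1 / znorm ℓ) := by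
        rw [Finset.mul_sum]
    _ ≤ 2 ^ γ * D / R ^ γ * R * (√(∑ ℓ ∈ shells ⌊R / 2⌋₊, ‖zext ω ℓ‖ ^ 2) *
          √(∑ ℓ ∈ shells ⌊R / 2⌋₊, (1 / znorm ℓ) ^ 2)) := by
        gcongr
        exact Real.sum_mul_le_sqrt_mul_sqrt _ _ _
    _ ≤ 2 ^ γ * D / R ^ γ * R * (S * (4 * √(Real.log R))) := by
        gcongr
        · exact Real.sqrt_le_iff.2 ⟨hS.le, (sum_shells_zext_sq_le ω hs _).trans hS2⟩
        · refine (Real.sqrt_le_sqrt (sum_shells_le hk)).trans (le_of_eq ?_)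
          rw [Real.sqrt_mul (by norm_num), show (16 : ℝ) = 4 ^ 2 by norm_num,
            Real.sqrt_sq (by norm_num)]
    _ = _ := by ring
end

section
/- For every γ > 0, D > 0, S > 0, every k ∈ ℤ²_*, and every ω : ℤ²_* → ℂ with |ω|_{∞,γ} ≤ D and ‖ω‖ ≤ S, the partial sum Σ₂ = ∑_{ℓ₂ ∈ ℤ²_*, |k|/2 < |ℓ₂| ≤ 2|k|, k−ℓ₂ ∈ ℤ²_*} |ω_{k−ℓ₂}| · |ω_{ℓ₂}| · |(ℓ₂^⊥ · k)| / |ℓ₂|² satisfies Σ₂ ≤ 2^{γ+1} · D · S · (6|k| + 1) / |k|^γ. -/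
/-!
The proof bounds two of the three factors of each summand pointwise and sums the third by
Cauchy–Schwarz. In the region `|k|/2 < |ℓ|` the decay hypothesis gives
`|ω_ℓ| ≤ D / |ℓ|^γ ≤ 2^γ D / |k|^γ`, and the weight is at most `|k| / |ℓ| ≤ 2`
(`weight_le_two`). What remains is `∑ |ω_{k-ℓ}|` over the lattice points of the disc
`|ℓ| ≤ 2|k|`. That disc lies in the square `latticeBox ⌊2|k|⌋`, which has at most
`(4|k| + 1)²` points, so Cauchy–Schwarz together with translation invariance of the `ℓ²` norm
(`sum_zext_sub_sq_le`) gives the bound `S (4|k| + 1) ≤ S (6|k| + 1)`.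
-/

open scoped Classical

/-- `a^⊥ = (−a₂, a₁)`. -/
def zperp (a : ℤ × ℤ) : ℤ × ℤ := (-a.2, a.1)

/-- Dot product of lattice points. -/
def zdot (a b : ℤ × ℤ) : ℤ := a.1 * b.1 + a.2 * b.2

lemma znorm_sq (a : ℤ × ℤ) : znorm a ^ 2 = (a.1 : ℝ) ^ 2 + (a.2 : ℝ) ^ 2 :=
  Real.sq_sqrt (by positivity)

lemma znorm_pos {a : ℤ × ℤ} (ha : a ≠ 0) : 0 < znorm a := by
  apply Real.sqrt_pos.2
  by_contra h
  apply ha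
  have h1 : (a.1 : ℝ) = 0 := by nlinarith [sq_nonneg (a.1 : ℝ), sq_nonneg (a.2 : ℝ)]
  have h2 : (a.2 : ℝ) = 0 := by nlinarith [sq_nonneg (a.1 : ℝ), sq_nonneg (a.2 : ℝ)]
  ext
  · exact_mod_cast h1
  · exact_mod_cast h2

lemma abs_fst_le_znorm (a : ℤ × ℤ) : |(a.1 : ℝ)| ≤ znorm a :=
  Real.abs_le_sqrt (by nlinarith [sq_nonneg (a.2 : ℝ)])

lemma abs_snd_le_znorm (a : ℤ × ℤ) : |(a.2 : ℝ)| ≤ znorm a :=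
  Real.abs_le_sqrt (by nlinarith [sq_nonneg (a.1 : ℝ)])

/-- The Cauchy–Schwarz inequality for `a^⊥` and `b`, using `|a^⊥| = |a|`. -/
lemma abs_zdot_zperp_le (a b : ℤ × ℤ) :
    |(zdot (zperp a) b : ℝ)| ≤ znorm a * znorm b := by
  refine abs_le_of_sq_le_sq ?_ (mul_nonneg (znorm_nonneg a) (znorm_nonneg b))
  rw [mul_pow, znorm_sq, znorm_sq]
  simp only [zdot, zperp]
  push_cast
  nlinarith [sq_nonneg ((a.1 : ℝ) * b.1 + a.2 * b.2)]

lemma weight_le_two {a k : ℤ × ℤ} (ha : a ≠ 0) (h : znorm k / 2 < znorm a) :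
    |(zdot (zperp a) k : ℝ)| / znorm a ^ 2 ≤ 2 := by
  have hp := znorm_pos ha
  rw [div_le_iff₀ (by positivity)]
  nlinarith [abs_zdot_zperp_le a k]

/-- The lattice points of the square `[-n, n]²`. -/
noncomputable def latticeBox (n : ℕ) : Finset (ℤ × ℤ) :=
  Finset.Icc (-(n : ℤ)) n ×ˢ Finset.Icc (-(n : ℤ)) n

lemma card_latticeBox (n : ℕ) : ((latticeBox n).card : ℝ) = (2 * n + 1) ^ 2 := by
  have h : ((n : ℤ) + 1 - -(n : ℤ)).toNat = 2 * n + 1 := by omega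
  rw [latticeBox, Finset.card_product, Int.card_Icc, h]
  push_cast
  ring

lemma mem_latticeBox_floor {a : ℤ × ℤ} {R : ℝ} (h : znorm a ≤ R) :
    a ∈ latticeBox ⌊R⌋₊ := by
  have key : ∀ m : ℤ, |(m : ℝ)| ≤ R → -(⌊R⌋₊ : ℤ) ≤ m ∧ m ≤ (⌊R⌋₊ : ℤ) := by
    intro m hm
    have : m.natAbs ≤ ⌊R⌋₊ := Nat.le_floor (by rwa [Nat.cast_natAbs, Int.cast_abs])
    omega
  simp only [latticeBox, Finset.mem_product, Finset.mem_Icc]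
  exact ⟨key _ ((abs_fst_le_znorm a).trans h), key _ ((abs_snd_le_znorm a).trans h)⟩

lemma zext_coe (ω : Zstar → ℂ) (j : Zstar) : zext ω j.1 = ω j := by
  simp [zext, j.2]

/-- Any finite piece of a translated and reflected copy of `ω` has `ℓ²` mass at most that
of `ω`. -/
lemma sum_zext_sub_sq_le (ω : Zstar → ℂ) (hs : Summable fun j : Zstar => ‖ω j‖ ^ 2)
    (k : ℤ × ℤ) (F : Finset (ℤ × ℤ)) :
    ∑ a ∈ F, ‖zext ω (k - a)‖ ^ 2 ≤ ∑' j : Zstar, ‖ω j‖ ^ 2 := by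
  have hzero : ∀ p ∉ Set.range (Subtype.val : Zstar → ℤ × ℤ), ‖zext ω p‖ ^ 2 = 0 := by
    intro p hp
    have : p = 0 := by
      by_contra h
      exact hp ⟨⟨p, h⟩, rfl⟩
    simp [zext, this]
  have hcomp : (fun p => ‖zext ω p‖ ^ 2) ∘ (Subtype.val : Zstar → ℤ × ℤ)
      = fun j => ‖ω j‖ ^ 2 := by
    funext j
    simp only [Function.comp_apply, zext_coe]
  have hsum : HasSum (fun p => ‖zext ω p‖ ^ 2) (∑' j : Zstar, ‖ω j‖ ^ 2) := by
    rw [← Subtype.val_injective.hasSum_iff hzero, hcomp]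
    exact hs.hasSum
  have hsum' := (Equiv.subLeft k).hasSum_iff.2 hsum
  exact sum_le_hasSum F (fun a _ => sq_nonneg _) hsum'

/-- bound on the middle partial sum `Σ₂` over `|k|/2 < |ℓ₂| ≤ 2|k|`. -/
theorem stmt2 :
    ∀ (γ D S : ℝ), 0 < γ → 0 < D → 0 < S →
    ∀ k : Zstar,
    ∀ ω : Zstar → ℂ,
      (∀ j : Zstar, znorm j.1 ^ γ * ‖ω j‖ ≤ D) →
      (Summable fun j : Zstar => ‖ω j‖ ^ 2) →
      (∑' j : Zstar, ‖ω j‖ ^ 2) ≤ S ^ 2 →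
      (∑' ℓ : ℤ × ℤ,
          if ℓ ≠ 0 ∧ znorm k.1 / 2 < znorm ℓ ∧ znorm ℓ ≤ 2 * znorm k.1 ∧ k.1 - ℓ ≠ 0 then
            ‖zext ω (k.1 - ℓ)‖ * ‖zext ω ℓ‖ * (|(zdot (zperp ℓ) k.1 : ℝ)| / znorm ℓ ^ 2)
          else 0)
        ≤ (2 : ℝ) ^ (γ + 1) * D * S * (6 * znorm k.1 + 1) / znorm k.1 ^ γ := by
  intro γ D S hγ hD hS k ω hdecay hs hS2
  have hK := znorm_pos k.2
  set K := znorm k.1 with hKdef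
  set F := latticeBox ⌊2 * K⌋₊ with hF
  set C : ℝ := 2 ^ (γ + 1) * D / K ^ γ with hC
  have hC0 : 0 ≤ C := by positivity
  rw [tsum_eq_sum (s := F)]
  swap
  · intro ℓ hℓ
    exact if_neg fun h => hℓ (mem_latticeBox_floor h.2.2.1)
  have hterm : ∀ ℓ ∈ F, (if ℓ ≠ 0 ∧ K / 2 < znorm ℓ ∧ znorm ℓ ≤ 2 * K ∧ k.1 - ℓ ≠ 0 then
        ‖zext ω (k.1 - ℓ)‖ * ‖zext ω ℓ‖ * (|(zdot (zperp ℓ) k.1 : ℝ)| / znorm ℓ ^ 2)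
        else 0) ≤ C * ‖zext ω (k.1 - ℓ)‖ := by
    intro ℓ _
    split_ifs with h
    · obtain ⟨h0, hlow, -, -⟩ := h
      have hω : ‖zext ω ℓ‖ ≤ 2 ^ γ * D / K ^ γ := by
        have h1 : (K / 2) ^ γ * ‖zext ω ℓ‖ ≤ D := by
          refine le_trans ?_ (hdecay ⟨ℓ, h0⟩)
          rw [← zext_coe ω ⟨ℓ, h0⟩]
          gcongr
        rw [Real.div_rpow hK.le zero_le_two, div_mul_eq_mul_div,
          div_le_iff₀ (by positivity)] at h1
        rw [le_div_iff₀ (by positivity)]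
        linarith
      calc ‖zext ω (k.1 - ℓ)‖ * ‖zext ω ℓ‖ * (|(zdot (zperp ℓ) k.1 : ℝ)| / znorm ℓ ^ 2)
          ≤ ‖zext ω (k.1 - ℓ)‖ * (2 ^ γ * D / K ^ γ) * 2 := by
            gcongr
            exact weight_le_two h0 hlow
        _ = C * ‖zext ω (k.1 - ℓ)‖ := by
            rw [hC, Real.rpow_add_one two_ne_zero]
            ring
    · positivity
  have hcard : (F.card : ℝ) ≤ (4 * K + 1) ^ 2 := by
    rw [hF, card_latticeBox]
    have := Nat.floor_le (show 0 ≤ 2 * K by positivity)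
    exact pow_le_pow_left₀ (by positivity) (by linarith) 2
  have hCS : ∑ ℓ ∈ F, ‖zext ω (k.1 - ℓ)‖ ≤ (4 * K + 1) * S := by
    refine le_of_sq_le_sq ?_ (by positivity)
    calc (∑ ℓ ∈ F, ‖zext ω (k.1 - ℓ)‖) ^ 2
        ≤ F.card * ∑ ℓ ∈ F, ‖zext ω (k.1 - ℓ)‖ ^ 2 := sq_sum_le_card_mul_sum_sq
      _ ≤ (4 * K + 1) ^ 2 * S ^ 2 := by
          gcongr
          exact (sum_zext_sub_sq_le ω hs k.1 F).trans hS2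
      _ = ((4 * K + 1) * S) ^ 2 := by ring
  calc _ ≤ ∑ ℓ ∈ F, C * ‖zext ω (k.1 - ℓ)‖ := Finset.sum_le_sum hterm
    _ = C * ∑ ℓ ∈ F, ‖zext ω (k.1 - ℓ)‖ := by rw [Finset.mul_sum]
    _ ≤ C * ((6 * K + 1) * S) := by
        gcongr
        refine hCS.trans ?_
        gcongr
        norm_num
    _ = 2 ^ (γ + 1) * D * S * (6 * K + 1) / K ^ γ := by
        rw [hC]
        ring
end
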